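/- Let [a,b] be a nondegenerate compact interval. The family 𝒜ℳ𝒲 is spaceable in c₀(C([a,b])): there exists an infinite-dimensional linear subspace 𝓜 of c₀(C([a,b])) that is closed with respect to the norm ‖(fₙ)ₙ‖ = supₙ ‖fₙ‖∞ and satisfies 𝓜 \ {0} ⊂ 𝒜ℳ𝒲. -/

import Mathlib

open Filter Topology ZeroAtInfty

/-- Anti M-Weierstrass sequences. -/
def AntiMW (a b : ℝ) (f : ℕ → C(Set.Icc a b, ℝ)) : Prop :=
  (∀ x : Set.Icc a b, Summable fun n => |f n x|) ∧
  (∃ S : Set.Icc a b → ℝ,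
    TendstoUniformly (fun N x => ∑ n ∈ Finset.range N, f n x) S atTop) ∧
  ¬ Summable fun n => ‖f n‖

/-!
Any infinite compact Hausdorff space `X` carries continuous functions `uₙ` of norm one with
pairwise disjoint supports. Split `ℕ` into infinitely many infinite blocks `{⟨j, k⟩ | k ∈ ℕ}` and
send `c ∈ c₀` to the sequence whose `⟨j, k⟩`-th term is `c j / (k + 1) • u ⟨j, k⟩`. The terms with
`k = 0` recover `c`, so this is an isometry of `c₀` into `c₀(C(X))`, and its range is closed and
infinite-dimensional. At each point at most one term of such a sequence is nonzero, so the series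
converges absolutely there, and uniformly on `X` because the terms tend to zero in norm. If
`c j ≠ 0`, the norms along the `j`-th block form a multiple of the harmonic series.
-/

section SubsingletonSupport

open Function

variable {ι X E : Type*}

theorem subsingleton_support_apply_of_pairwise_disjoint [Zero E] {f : ι → X → E}
    (hf : Pairwise (Disjoint on fun i => support (f i))) (x : X) :
    (support fun i => f i x).Subsingleton := fun _ hi _ hj =>
  hf.eq (Set.not_disjoint_iff.2 ⟨x, hi, hj⟩)

theorem exists_tsum_eq_apply_of_subsingleton_support [AddCommMonoid E] [TopologicalSpace E]
    [Nonempty ι] {g : ι → E} (hg : (support g).Subsingleton) :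
    ∃ i, ∑' j, g j = g i := by
  obtain hempty | ⟨i, hi⟩ := hg.eq_empty_or_singleton
  · exact ⟨Classical.arbitrary ι, by simp [support_eq_empty_iff.1 hempty]⟩
  · exact ⟨i, tsum_eq_single i fun j hj => notMem_support.1 (by simpa [hi] using hj)⟩

variable [NormedAddCommGroup E]

theorem norm_tsum_sub_sum_range_lt_of_subsingleton_support {g : ℕ → E} {ε : ℝ} {N : ℕ}
    (hg : (support g).Subsingleton) (hε : ∀ n ≥ N, ‖g n‖ < ε) :
    ‖∑' n, g n - ∑ n ∈ Finset.range N, g n‖ < ε := by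
  have htail : (support fun n => g (n + N)).Subsingleton :=
    hg.preimage (add_left_injective N)
  obtain ⟨m, hm⟩ := exists_tsum_eq_apply_of_subsingleton_support htail
  rw [← (summable_of_hasFiniteSupport hg.finite).sum_add_tsum_nat_add N, add_sub_cancel_left, hm]
  exact hε _ (Nat.le_add_left N m)

theorem tendstoUniformly_sum_range_of_pairwise_disjoint_support {f : ℕ → X → E}
    (hdisj : Pairwise (Disjoint on fun n => support (f n)))
    (hlim : TendstoUniformly f 0 atTop) :
    TendstoUniformly (fun N x => ∑ n ∈ Finset.range N, f n x) (fun x => ∑' n, f n x) atTop := by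
  rw [Metric.tendstoUniformly_iff] at hlim ⊢
  intro ε hε
  obtain ⟨N, hN⟩ := eventually_atTop.1 (hlim ε hε)
  filter_upwards [eventually_ge_atTop N] with M hM x
  rw [dist_eq_norm]
  refine norm_tsum_sub_sum_range_lt_of_subsingleton_support
    (subsingleton_support_apply_of_pairwise_disjoint hdisj x) fun n hn => ?_
  simpa using hN n (hM.trans hn) x

end SubsingletonSupport

section ZeroAtInfty

variable {ι V : Type*} [TopologicalSpace ι]

theorem tendsto_cofinite_zeroAtInfty [DiscreteTopology ι] [TopologicalSpace V] [Zero V]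
    (F : C₀(ι, V)) : Tendsto F cofinite (𝓝 0) :=
  cocompact_eq_cofinite ι ▸ F.zero_at_infty'

variable [SeminormedAddCommGroup V]

theorem norm_apply_le_norm_zeroAtInfty (F : C₀(ι, V)) (i : ι) : ‖F i‖ ≤ ‖F‖ :=
  F.toBCF.norm_coe_le_norm i

theorem norm_zeroAtInfty_le {F : C₀(ι, V)} {C : ℝ} (hC : 0 ≤ C) (hF : ∀ i, ‖F i‖ ≤ C) :
    ‖F‖ ≤ C :=
  (BoundedContinuousFunction.norm_le hC).2 hF

theorem not_finiteDimensional_zeroAtInfty (𝕜 : Type*) [NormedField 𝕜] [DiscreteTopology ι]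
    [Infinite ι] : ¬ FiniteDimensional 𝕜 C₀(ι, 𝕜) := by
  classical
  intro hfin
  let e (i : ι) : C₀(ι, 𝕜) :=
    { toFun := Pi.single i 1
      continuous_toFun := continuous_of_discreteTopology
      zero_at_infty' := by
        rw [cocompact_eq_cofinite]
        refine tendsto_nhds_of_eventually_eq ?_
        filter_upwards [(Set.finite_singleton i).compl_mem_cofinite] with j hj
        exact Pi.single_eq_of_ne hj 1 }
  let coeFn : C₀(ι, 𝕜) →ₗ[𝕜] ι → 𝕜 :=
    { toFun := (⇑)
      map_add' := ZeroAtInftyContinuousMap.coe_add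
      map_smul' := ZeroAtInftyContinuousMap.coe_smul }
  have he : LinearIndependent 𝕜 e :=
    LinearIndependent.of_comp coeFn (Pi.linearIndependent_single_one ι 𝕜)
  have := he.finite
  exact not_finite ι

end ZeroAtInfty

section HarmonicBlock

variable {V : Type*} [NormedAddCommGroup V] [NormedSpace ℝ V]

/-- The coefficient sequence made of the harmonic blocks `k ↦ c j / (k + 1)`, one for each `j`,
laid out along `ℕ` by the pairing function: it takes the value `c j / (k + 1)` at
`Nat.pair j k`. -/
noncomputable def harmonicBlockCoeff (c : ℕ → ℝ) (n : ℕ) : ℝ :=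
  c n.unpair.1 * (1 / ((n.unpair.2 : ℝ) + 1))

theorem abs_harmonicBlockCoeff (c : ℕ → ℝ) (n : ℕ) :
    |harmonicBlockCoeff c n| = |c n.unpair.1| * (1 / ((n.unpair.2 : ℝ) + 1)) :=
  (abs_mul _ _).trans (congrArg _ (abs_of_pos Nat.one_div_pos_of_nat))

theorem abs_harmonicBlockCoeff_le (c : ℕ → ℝ) (n : ℕ) :
    |harmonicBlockCoeff c n| ≤ |c n.unpair.1| := by
  rw [abs_harmonicBlockCoeff]
  refine mul_le_of_le_one_right (abs_nonneg _) ?_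
  exact (div_le_one (Nat.cast_add_one_pos _)).2 (by simp)

theorem tendsto_harmonicBlockCoeff {c : ℕ → ℝ} (hc : Tendsto c cofinite (𝓝 0)) :
    Tendsto (harmonicBlockCoeff c) cofinite (𝓝 0) := by
  have hharm : Tendsto (fun k : ℕ => 1 / ((k : ℝ) + 1)) cofinite (𝓝 0) := by
    rw [Nat.cofinite_eq_atTop]
    exact tendsto_one_div_add_atTop_nhds_zero_nat
  exact (tendsto_mul_cofinite_nhds_zero hc hharm).comp
    Nat.pairEquiv.symm.injective.tendsto_cofinite

theorem not_summable_abs_harmonicBlockCoeff {c : ℕ → ℝ} (hc : c ≠ 0) :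
    ¬ Summable fun n => |harmonicBlockCoeff c n| := by
  intro hsum
  obtain ⟨j, hj⟩ := Function.ne_iff.1 hc
  have hblock : Summable fun k : ℕ => |c j| * (1 / ((k : ℝ) + 1)) := by
    have hinj : Function.Injective (Nat.pair j) := fun k l h => (Nat.pair_eq_pair.1 h).2
    refine (hsum.comp_injective hinj).congr fun k => ?_
    rw [Function.comp_apply, abs_harmonicBlockCoeff, Nat.unpair_pair]
  have hharm := (summable_mul_left_iff (abs_ne_zero.2 hj)).1 hblock
  exact Real.not_summable_one_div_natCast <| (summable_nat_add_iff 1).1 <| by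
    simpa only [Nat.cast_add, Nat.cast_one] using hharm

/-- The linear map from `c₀` to `c₀(V)` attached to a sequence `u` of unit vectors of `V`: the
`n`-th term of the image of `c` is `harmonicBlockCoeff c n • u n`. -/
noncomputable def harmonicBlockMap (u : ℕ → V) (hu : ∀ n, ‖u n‖ = 1) :
    C₀(ℕ, ℝ) →ₗ[ℝ] C₀(ℕ, V) where
  toFun c :=
    { toFun := fun n => harmonicBlockCoeff c n • u n
      continuous_toFun := continuous_of_discreteTopology
      zero_at_infty' := by
        rw [cocompact_eq_cofinite]
        have hcoeff := tendsto_harmonicBlockCoeff (tendsto_cofinite_zeroAtInfty c)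
        exact hcoeff.zero_smul_isBoundedUnder_le (isBoundedUnder_of ⟨1, fun n => (hu n).le⟩) }
  map_add' c d := by
    ext n
    simp [harmonicBlockCoeff, add_mul, add_smul]
  map_smul' r c := by
    ext n
    simp [harmonicBlockCoeff, mul_assoc, mul_smul]

variable {u : ℕ → V} (hu : ∀ n, ‖u n‖ = 1)

theorem harmonicBlockMap_apply (c : C₀(ℕ, ℝ)) (n : ℕ) :
    harmonicBlockMap u hu c n = harmonicBlockCoeff c n • u n := rfl

theorem norm_harmonicBlockMap_apply (c : C₀(ℕ, ℝ)) (n : ℕ) :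
    ‖harmonicBlockMap u hu c n‖ = |harmonicBlockCoeff c n| := by
  rw [harmonicBlockMap_apply, norm_smul, hu, mul_one, Real.norm_eq_abs]

theorem norm_harmonicBlockMap (c : C₀(ℕ, ℝ)) : ‖harmonicBlockMap u hu c‖ = ‖c‖ := by
  apply le_antisymm
  · refine norm_zeroAtInfty_le (norm_nonneg c) fun n => ?_
    calc ‖harmonicBlockMap u hu c n‖ = |harmonicBlockCoeff c n| :=
          norm_harmonicBlockMap_apply hu c n
      _ ≤ |c n.unpair.1| := abs_harmonicBlockCoeff_le c n
      _ ≤ ‖c‖ := norm_apply_le_norm_zeroAtInfty c _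
  · refine norm_zeroAtInfty_le (norm_nonneg _) fun j => ?_
    calc ‖c j‖ = ‖harmonicBlockMap u hu c (Nat.pair j 0)‖ := by
          simp [norm_harmonicBlockMap_apply, abs_harmonicBlockCoeff]
      _ ≤ ‖harmonicBlockMap u hu c‖ := norm_apply_le_norm_zeroAtInfty _ _

theorem isometry_harmonicBlockMap : Isometry (harmonicBlockMap u hu) :=
  AddMonoidHomClass.isometry_of_norm _ (norm_harmonicBlockMap hu)

theorem isClosed_range_harmonicBlockMap :
    IsClosed ((harmonicBlockMap u hu).range : Set C₀(ℕ, V)) :=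
  (isometry_harmonicBlockMap hu).isClosedEmbedding.isClosed_range

theorem not_finiteDimensional_range_harmonicBlockMap :
    ¬ FiniteDimensional ℝ (harmonicBlockMap u hu).range := fun _ =>
  not_finiteDimensional_zeroAtInfty ℝ
    (LinearEquiv.ofInjective _ (isometry_harmonicBlockMap hu).injective).symm.finiteDimensional

end HarmonicBlock

section AntiMWeierstrass

open Function

variable {X : Type*} [TopologicalSpace X] [CompactSpace X]

/-- Anti M-Weierstrass sequences on an arbitrary compact space: the series converges absolutely at
every point and uniformly, but the sum of the norms diverges. For `X = [a, b]` this is `AntiMW`. -/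
def IsAntiMWeierstrass (f : ℕ → C(X, ℝ)) : Prop :=
  (∀ x, Summable fun n => |f n x|) ∧
  (∃ S : X → ℝ, TendstoUniformly (fun N x => ∑ n ∈ Finset.range N, f n x) S atTop) ∧
  ¬ Summable fun n => ‖f n‖

theorem isAntiMWeierstrass_of_pairwise_disjoint_support {f : ℕ → C(X, ℝ)}
    (hdisj : Pairwise (Disjoint on fun n => support (f n)))
    (hlim : Tendsto f atTop (𝓝 0)) (hnorm : ¬ Summable fun n => ‖f n‖) :
    IsAntiMWeierstrass f := by
  refine ⟨fun x => ?_, ⟨fun x => ∑' n, f n x, ?_⟩, hnorm⟩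
  · have hsub := subsingleton_support_apply_of_pairwise_disjoint hdisj x
    exact (summable_of_hasFiniteSupport hsub.finite).abs
  · exact tendstoUniformly_sum_range_of_pairwise_disjoint_support hdisj
      (ContinuousMap.tendsto_iff_tendstoUniformly.1 hlim)

theorem exists_norm_eq_one_support_subset [T2Space X] {U : Set X} (hU : IsOpen U)
    (hne : U.Nonempty) :
    ∃ φ : C(X, ℝ), ‖φ‖ = 1 ∧ support φ ⊆ U := by
  obtain ⟨p, hp⟩ := hne
  obtain ⟨φ, hφ0, hφ1, hφ⟩ := exists_continuous_zero_one_of_isClosed hU.isClosed_compl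
    (isClosed_singleton (x := p)) (Set.disjoint_singleton_right.2 fun h => h hp)
  refine ⟨φ, le_antisymm ?_ ?_, fun x hx => by_contra fun hxU => hx (hφ0 hxU)⟩
  · refine (φ.norm_le zero_le_one).2 fun x => ?_
    exact (Real.norm_of_nonneg (hφ x).1).trans_le (hφ x).2
  · simpa [hφ1 (Set.mem_singleton p)] using φ.norm_coe_le_norm p

variable (X) in
theorem exists_seq_norm_eq_one_pairwise_disjoint_support [T2Space X] [Infinite X] :
    ∃ u : ℕ → C(X, ℝ), (∀ n, ‖u n‖ = 1) ∧
      Pairwise (Disjoint on fun n => support (u n)) := by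
  obtain ⟨U, hinf, hopen, hdisj⟩ := exists_seq_infinite_isOpen_pairwise_disjoint X
  choose u hnorm hsupp using fun n => exists_norm_eq_one_support_subset (hopen n) (hinf n).nonempty
  exact ⟨u, hnorm, fun m n hmn => (hdisj hmn).mono (hsupp m) (hsupp n)⟩

theorem isAntiMWeierstrass_harmonicBlockMap {u : ℕ → C(X, ℝ)} (hu : ∀ n, ‖u n‖ = 1)
    (hdisj : Pairwise (Disjoint on fun n => support (u n)))
    {c : C₀(ℕ, ℝ)} (hc : c ≠ 0) : IsAntiMWeierstrass (harmonicBlockMap u hu c) := by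
  refine isAntiMWeierstrass_of_pairwise_disjoint_support (fun m n hmn => ?_) ?_ ?_
  · exact (hdisj hmn).mono (support_const_smul_subset _ _)
      (support_const_smul_subset _ _)
  · simpa only [Nat.cofinite_eq_atTop] using
      tendsto_cofinite_zeroAtInfty (harmonicBlockMap u hu c)
  · simpa only [norm_harmonicBlockMap_apply] using
      not_summable_abs_harmonicBlockCoeff (DFunLike.coe_injective.ne hc)

theorem stmt11_general (X : Type*) [TopologicalSpace X] [CompactSpace X] [T2Space X]
    [Infinite X] :
    ∃ 𝓜 : Submodule ℝ C₀(ℕ, C(X, ℝ)),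
      IsClosed (𝓜 : Set C₀(ℕ, C(X, ℝ))) ∧
      ¬ FiniteDimensional ℝ 𝓜 ∧
      ∀ F ∈ 𝓜, F ≠ 0 → IsAntiMWeierstrass fun n => F n := by
  obtain ⟨u, hu, hdisj⟩ := exists_seq_norm_eq_one_pairwise_disjoint_support X
  refine ⟨(harmonicBlockMap u hu).range, isClosed_range_harmonicBlockMap hu,
    not_finiteDimensional_range_harmonicBlockMap hu, ?_⟩
  rintro _ ⟨c, rfl⟩ hc
  exact isAntiMWeierstrass_harmonicBlockMap hu hdisj (ne_zero_of_map hc)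

end AntiMWeierstrass

/-- 𝒜ℳ𝒲 is spaceable in `c₀(C([a,b]))` (here realized as the space
`C₀(ℕ, C([a,b]))` of sequences of continuous functions whose sup norms tend to zero,
with the norm `‖(fₙ)ₙ‖ = supₙ ‖fₙ‖∞`). -/
theorem stmt11 (a b : ℝ) (hab : a < b) :
    ∃ 𝓜 : Submodule ℝ C₀(ℕ, C(Set.Icc a b, ℝ)),
      IsClosed (𝓜 : Set C₀(ℕ, C(Set.Icc a b, ℝ))) ∧
      ¬ FiniteDimensional ℝ 𝓜 ∧
      ∀ F ∈ 𝓜, F ≠ 0 → AntiMW a b (fun n => F n) := by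
  have : Infinite (Set.Icc a b) := (Set.Icc_infinite hab).to_subtype
  exact stmt11_general (Set.Icc a b)
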